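/- (Perel'man–Wegner) Let Δ be a finite abstract simplicial complex of dimension d on a finite vertex set V. Then Δ is (2d+1)-representable: there exists a family (U_v)_{v ∈ V} of convex subsets of ℝ^{2d+1} such that for every nonempty subset σ ⊆ V, σ is a face of Δ if and only if ⋂_{v ∈ σ} U_v ≠ ∅. -/

import Mathlib

/-!
The polynomial `P_σ = ∏_{v ∈ σ} (X - t_v)² · (X² + 1)^{d + 1 - |σ|}` is monic of degree `2d + 2`,
vanishes at the nodes of `σ` and is positive at all other nodes. Let `U_v` be the convex hull of the
`P_σ` with `v ∈ σ ∈ Δ`. A point of `⋂_{v ∈ τ} U_v` is a convex combination of the `P_σ` that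
vanishes at every node of `τ`. Since `P_σ ≥ 0` at all nodes, each `P_σ` occurring in it also
vanishes there, so `τ ⊆ σ` and `τ` is a face. Forgetting the leading coefficient, which is `1`, and
the constant coefficient projects to dimension `2d + 1`. This is injective on the union of the
`U_v`: a monic polynomial whose minimum over the nodes is `0` is determined by its other
coefficients.
-/

open Polynomial

section Nerve

variable {𝕜 E V : Type*} [Field 𝕜] [LinearOrder 𝕜] [AddCommGroup E] [Module 𝕜 E]
  {Δ : Set (Finset V)} {p : Finset V → E} {f : V → E →ₗ[𝕜] 𝕜}

variable (𝕜) in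
/-- The convex hull of the points `p σ` over the faces `σ` of `Δ` containing `v`, that is, over the
open star of `v`; these hulls represent `Δ` as a nerve. -/
def starHull (Δ : Set (Finset V)) (p : Finset V → E) (v : V) : Set E :=
  convexHull 𝕜 (p '' {σ ∈ Δ | v ∈ σ})

lemma starHull_subset {v : V} {s : Set E} (hs : Convex 𝕜 s) (h : ∀ σ ∈ Δ, v ∈ σ → p σ ∈ s) :
    starHull 𝕜 Δ p v ⊆ s :=
  convexHull_min (Set.image_subset_iff.2 fun σ hσ => h σ hσ.1 hσ.2) hs

/-- The dual form of neighborliness: the halfspaces `0 ≤ f v` all contain the points `p σ`, and the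
face `σ` is recovered as the set of those `v` whose bounding hyperplane passes through `p σ`. -/
def ExposesFaces (Δ : Set (Finset V)) (p : Finset V → E) (f : V → E →ₗ[𝕜] 𝕜) : Prop :=
  ∀ σ ∈ Δ, ∀ v, 0 ≤ f v (p σ) ∧ (f v (p σ) = 0 ↔ v ∈ σ)

namespace ExposesFaces

variable [IsStrictOrderedRing 𝕜]

lemma apply_nonneg (h : ExposesFaces Δ p f) {v : V} {x : E} (hx : x ∈ starHull 𝕜 Δ p v) (w : V) :
    0 ≤ f w x :=
  starHull_subset (convex_halfSpace_ge (f w).isLinear 0) (fun σ hσ _ => (h σ hσ w).1) hx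

lemma apply_eq_zero (h : ExposesFaces Δ p f) {v : V} {x : E} (hx : x ∈ starHull 𝕜 Δ p v) :
    f v x = 0 :=
  starHull_subset (convex_hyperplane (f v).isLinear 0) (fun σ hσ => (h σ hσ v).2.2) hx

lemma sum_apply_pos (h : ExposesFaces Δ p f) (hΔ : IsLowerSet Δ) {τ : Finset V} (hτ : τ ∉ Δ)
    {v : V} {x : E} (hx : x ∈ starHull 𝕜 Δ p v) : 0 < (∑ w ∈ τ, f w) x := by
  refine starHull_subset (convex_halfSpace_gt (∑ w ∈ τ, f w).isLinear 0) (fun σ hσ _ => ?_) hx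
  obtain ⟨u, huτ, huσ⟩ : ∃ u ∈ τ, u ∉ σ := Finset.not_subset.1 fun hτσ => hτ (hΔ hτσ hσ)
  have hu : 0 < f u (p σ) := (h σ hσ u).1.lt_of_ne' (mt (h σ hσ u).2.1 huσ)
  simp only [Set.mem_ofPred_eq, LinearMap.sum_apply]
  exact Finset.sum_pos' (fun w _ => (h σ hσ w).1) ⟨u, huτ, hu⟩

theorem nonempty_biInter_starHull_iff (h : ExposesFaces Δ p f) (hΔ : IsLowerSet Δ) {τ : Finset V}
    (hτ : τ.Nonempty) : (⋂ v ∈ τ, starHull 𝕜 Δ p v).Nonempty ↔ τ ∈ Δ := by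
  constructor
  · rintro ⟨x, hx⟩
    rw [Set.mem_iInter₂] at hx
    by_contra hτΔ
    obtain ⟨v, hv⟩ := hτ
    have hzero : (∑ w ∈ τ, f w) x = 0 := by
      rw [LinearMap.sum_apply]
      exact Finset.sum_eq_zero fun w hw => h.apply_eq_zero (hx w hw)
    exact (h.sum_apply_pos hΔ hτΔ (hx v hv)).ne' hzero
  · intro hτΔ
    exact ⟨p τ, Set.mem_iInter₂.2 fun v hv =>
      subset_convexHull 𝕜 _ (Set.mem_image_of_mem p ⟨hτΔ, hv⟩)⟩

end ExposesFaces

end Nerve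

section MiddleCoeffs

variable {R : Type*} [CommRing R]

variable (R) in
/-- The coefficients of `X, X², …, Xⁿ` of a polynomial. On monic polynomials of degree `n + 1` this
loses only the constant coefficient. -/
noncomputable def middleCoeffs (n : ℕ) : R[X] →ₗ[R] Fin n → R :=
  LinearMap.pi fun i => lcoeff R (i + 1)

lemma eq_add_C_of_middleCoeffs_eq {n : ℕ} {P Q : R[X]} (hP : IsMonicOfDegree P (n + 1))
    (hQ : IsMonicOfDegree Q (n + 1)) (h : middleCoeffs R n P = middleCoeffs R n Q) :
    P = Q + C (P.coeff 0 - Q.coeff 0) := by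
  ext k
  rcases k with _ | k
  · simp only [coeff_add, coeff_C_zero, add_sub_cancel]
  · rw [coeff_add, coeff_C_succ, add_zero]
    rcases lt_or_ge k n with hk | hk
    · exact congrFun h ⟨k, hk⟩
    · refine sub_eq_zero.1 ((coeff_sub P Q _).symm.trans (coeff_eq_zero_of_natDegree_lt ?_))
      exact (hP.natDegree_sub_lt n.succ_ne_zero hQ).trans_le (by lia)

lemma injOn_middleCoeffs {ι : Type*} [PartialOrder R] [IsOrderedAddMonoid R] (t : ι → R) (n : ℕ) :
    Set.InjOn (middleCoeffs R n)
      {P | IsMonicOfDegree P (n + 1) ∧ IsLeast (Set.range fun i => P.eval (t i)) 0} := by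
  rintro P ⟨hP, ⟨i, hi⟩, hPnonneg⟩ Q ⟨hQ, ⟨j, hj⟩, hQnonneg⟩ h
  rw [mem_lowerBounds, Set.forall_mem_range] at hPnonneg hQnonneg
  have hPQ := eq_add_C_of_middleCoeffs_eq hP hQ h
  set c := P.coeff 0 - Q.coeff 0
  have heval (x : R) : P.eval x = Q.eval x + c := by rw [hPQ, eval_add, eval_C]
  have hc : c = 0 := by
    apply le_antisymm
    · calc c ≤ Q.eval (t i) + c := le_add_of_nonneg_left (hQnonneg i)
        _ = 0 := (heval _).symm.trans hi
    · calc 0 ≤ P.eval (t j) := hPnonneg j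
        _ = c := by rw [heval, show Q.eval (t j) = 0 from hj, zero_add]
  rw [hPQ, hc, C_0, add_zero]

end MiddleCoeffs

section FacePolynomial

variable {𝕜 V : Type*} [Field 𝕜]

/-- A polynomial with double roots exactly at the nodes of `σ`. The factor `X² + 1` has no roots
in an ordered field and brings the degree up to `2n` when `σ` has at most `n` elements. -/
noncomputable def facePolynomial (t : V → 𝕜) (n : ℕ) (σ : Finset V) : 𝕜[X] :=
  Lagrange.nodal σ t ^ 2 * (X ^ 2 + 1) ^ (n - σ.card)

lemma isMonicOfDegree_facePolynomial (t : V → 𝕜) {n : ℕ} {σ : Finset V} (hσ : σ.card ≤ n) :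
    IsMonicOfDegree (facePolynomial t n σ) (2 * n) := by
  have hnodal : IsMonicOfDegree (Lagrange.nodal σ t) σ.card :=
    ⟨Lagrange.natDegree_nodal, Lagrange.nodal_monic⟩
  have hquad : IsMonicOfDegree (X ^ 2 + 1 : 𝕜[X]) 2 :=
    ⟨natDegree_X_pow_add_C (r := 1), monic_X_pow_add_C 1 two_ne_zero⟩
  have hdeg : σ.card * 2 + 2 * (n - σ.card) = 2 * n := by lia
  exact hdeg ▸ (hnodal.pow 2).mul (hquad.pow _)

variable [LinearOrder 𝕜] [IsStrictOrderedRing 𝕜]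

lemma convex_setOf_isMonicOfDegree (n : ℕ) : Convex 𝕜 {P : 𝕜[X] | IsMonicOfDegree P n} := by
  have h : {P : 𝕜[X] | IsMonicOfDegree P n} = ↑(degreeLE 𝕜 n) ∩ {P | lcoeff 𝕜 n P = 1} := by
    ext P
    simp only [Set.mem_ofPred_eq, isMonicOfDegree_iff, Set.mem_inter_iff, SetLike.mem_coe,
      mem_degreeLE, natDegree_le_iff_degree_le, lcoeff_apply]
  rw [h]
  exact (degreeLE 𝕜 n).convex.inter (convex_hyperplane (lcoeff 𝕜 n).isLinear 1)

lemma exposesFaces_facePolynomial (t : V ↪ 𝕜) (n : ℕ) (Δ : Set (Finset V)) :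
    ExposesFaces Δ (facePolynomial t n) fun v => leval (t v) := by
  intro σ _ v
  have hquad : 0 < (t v ^ 2 + 1) ^ (n - σ.card) := by positivity
  have hnodal : (Lagrange.nodal σ t).eval (t v) = 0 ↔ v ∈ σ := by
    simp only [Lagrange.eval_nodal, Finset.prod_eq_zero_iff, sub_eq_zero,
      EmbeddingLike.apply_eq_iff_eq, exists_eq_right']
  have heval : leval (t v) (facePolynomial t n σ) =
      (Lagrange.nodal σ t).eval (t v) ^ 2 * (t v ^ 2 + 1) ^ (n - σ.card) := by
    simp only [leval_apply, facePolynomial, eval_mul, eval_pow, eval_add, eval_X, eval_one]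
  rw [heval, mul_eq_zero_iff_right hquad.ne', sq_eq_zero_iff, hnodal]
  exact ⟨by positivity, Iff.rfl⟩

lemma starHull_facePolynomial_subset (t : V → 𝕜) {n : ℕ} {Δ : Set (Finset V)}
    (hcard : ∀ σ ∈ Δ, σ.card ≤ n) (v : V) :
    starHull 𝕜 Δ (facePolynomial t n) v ⊆ {P | IsMonicOfDegree P (2 * n)} :=
  starHull_subset (convex_setOf_isMonicOfDegree (2 * n)) fun σ hσ _ =>
    isMonicOfDegree_facePolynomial t (hcard σ hσ)

lemma isLeast_eval_of_mem_starHull {t : V ↪ 𝕜} {n : ℕ} {Δ : Set (Finset V)} {v : V} {P : 𝕜[X]}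
    (hP : P ∈ starHull 𝕜 Δ (facePolynomial t n) v) :
    IsLeast (Set.range fun w => P.eval (t w)) 0 := by
  have h := exposesFaces_facePolynomial t n Δ
  refine ⟨⟨v, h.apply_eq_zero hP⟩, ?_⟩
  rintro _ ⟨w, rfl⟩
  exact h.apply_nonneg hP w

end FacePolynomial

theorem perelman_wegner_representability_general
    {𝕜 V : Type*} [Field 𝕜] [LinearOrder 𝕜] [IsStrictOrderedRing 𝕜] (t : V ↪ 𝕜)
    {Δ : Set (Finset V)} (hΔ : IsLowerSet Δ) {d : ℕ} (hdim : ∀ σ ∈ Δ, σ.card ≤ d + 1) :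
    ∃ U : V → Set (Fin (2 * d + 1) → 𝕜),
      (∀ v, Convex 𝕜 (U v)) ∧
      ∀ σ : Finset V, σ.Nonempty →
        (σ ∈ Δ ↔ (⋂ v ∈ σ, U v).Nonempty) := by
  let H := starHull 𝕜 Δ (facePolynomial t (d + 1))
  have hinj (σ : Finset V) : Set.InjOn (middleCoeffs 𝕜 (2 * d + 1)) (⋃ v ∈ σ, H v) := by
    refine (injOn_middleCoeffs t _).mono (Set.iUnion₂_subset fun v _ P hP => ?_)
    exact ⟨starHull_facePolynomial_subset t hdim v hP, isLeast_eval_of_mem_starHull hP⟩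
  refine ⟨fun v => middleCoeffs 𝕜 (2 * d + 1) '' H v,
    fun v => (convex_convexHull 𝕜 _).linear_image _, fun σ hσ => ?_⟩
  rw [← (hinj σ).image_biInter_eq hσ, Set.image_nonempty]
  exact ((exposesFaces_facePolynomial t _ Δ).nonempty_biInter_starHull_iff hΔ hσ).symm

/-- **Perel'man–Wegner theorem.** Every finite abstract simplicial complex `Δ` of
dimension `d` on a finite vertex set `V` is `(2d+1)`-representable: there is a family
`(U_v)_{v ∈ V}` of convex subsets of `ℝ^{2d+1}` such that a nonempty `σ ⊆ V` is a face
of `Δ` if and only if `⋂_{v ∈ σ} U_v ≠ ∅`. -/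
theorem perelman_wegner_representability
    {V : Type*} [Fintype V] [DecidableEq V] (Δ : Finset (Finset V)) (d : ℕ)
    (hclosed : ∀ σ ∈ Δ, ∀ τ ⊆ σ, τ ∈ Δ)
    (hdim_le : ∀ σ ∈ Δ, σ.card ≤ d + 1)
    (hdim_eq : ∃ σ ∈ Δ, σ.card = d + 1) :
    ∃ U : V → Set (Fin (2 * d + 1) → ℝ),
      (∀ v, Convex ℝ (U v)) ∧
      ∀ σ : Finset V, σ.Nonempty →
        (σ ∈ Δ ↔ (⋂ v ∈ σ, U v).Nonempty) := by
  obtain ⟨e⟩ := nonempty_embedding_nat V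
  exact perelman_wegner_representability_general (Δ := (Δ : Set (Finset V)))
    (e.trans Nat.castEmbedding) (fun σ τ hτσ hσ => hclosed σ hσ τ hτσ) hdim_le
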